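/- Let 0 ≤ k < d be integers and let {x_u : u ∈ {0,1}^k} and {y_w : w ∈ {0,1,2}^k} be families of non-negative real numbers such that y_{u+v} ≥ x_u + x_v for all u, v ∈ {0,1}^k, and such that x_u ≥ x_v whenever v_i ≥ u_i for all i. Then Σ_{w ∈ {0,1,2}^k} y_w^{d−k} ≥ C_d · Σ_{u ∈ {0,1}^k} x_u^{d−k}. -/

import Mathlib

/-!
Put `n = d - k ≥ 1`. A vector in `{0,1}^k` is the indicator of a set, and `w ∈ {0,1,2}^k` is a nested pair
`T ⊆ S` with `T = {w = 2}`, `S = {w ≥ 1}`. Any sets `U, V` with `U ∩ V = T`, `U ∪ V = S` have indicators summing to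
`w`, hence bound `y_w` from below. Write `p S` for the `n`-th power of `x` at `S`, a nonnegative antitone function,
and `P s` for the sum of `p` over sets of size `s`.

If `n = 1`, averaging over all such `U, V` gives the constant `2 * (3/2)^k` (`pairs_ge_one`), which is at least
`C_{k+1}` (`Cconst_le`).

If `n ≥ 2`, then `(a + b)^n ≥ a^n + (2^n - 1) b^n` for `a ≥ b ≥ 0` (`add_pow_ge`) turns every pair `U, V` into a lower
bound that is linear in `p`. The choice `U = S`, `V = T` gives in total `∑ s, c_s * P s` with
`c_s = 2^(k-s) + (2^n - 1) * 2^s` (`sum_nested`). Most levels have `c_s ≥ C_d`: all of them if `k ≤ n`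
(`weight_nonneg_small`), all but level `r` if `k = n + 2r` (`weight_nonneg_even`), and all but levels `r`, `r + 1` if
`k = n + 2r + 1` (`weight_nonneg_odd`). The deficient levels are paid for by the ones below, through the level
comparison `(s + 1) * P (s + 1) ≤ (k - s) * P s` (`levelSum_succ_le`); see `weights_even` and `weights_odd`.

This is too weak if `k = n + 1` and for `(n, k) = (2, 5), (2, 7), (3, 6), (4, 7)`. There, at pairs with `|S \ T| = 2`,
the nested bound is mixed with a small multiple of the bound from the incomparable pair `T ∪ {i}`, `T ∪ {j}`, where
`S = T ∪ {i, j}` (`pairs_ge_special`, `pairs_ge_exceptional`).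
-/

/-- The constant `C_d` from the paper. -/
noncomputable def Cconst (d : ℕ) : ℝ :=
  if d ≤ 5 then 2 * (3 / 2) ^ (d - 1)
  else if d % 2 = 0 then 2 ^ (d / 2 + 1) - 1
  else 3 * 2 ^ ((d - 1) / 2) - 3 / 2

/-- The set `{0,1,…,n-1}^k` as a finset of functions `Fin k → ℕ`. -/
def cube (k n : ℕ) : Finset (Fin k → ℕ) :=
  Fintype.piFinset fun _ => Finset.range n

/-! ### Level sums on the Boolean lattice -/

/-- The sum of `p` over the `s`-element subsets of `Fin k`, the `s`-th level of the Boolean lattice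
(zero when `s > k`). -/
def levelSum {k : ℕ} (p : Finset (Fin k) → ℝ) (s : ℕ) : ℝ :=
  ∑ S ∈ Finset.powersetCard s (Finset.univ : Finset (Fin k)), p S

theorem sum_eq_sum_levels {k : ℕ} (h : Finset (Fin k) → ℝ) :
    ∑ S, h S = ∑ s ∈ Finset.range (k + 1), ∑ S ∈ Finset.powersetCard s Finset.univ, h S := by
  rw [← Finset.powerset_univ, Finset.sum_powerset]
  simp

theorem sum_weight_eq_sum_levels {k : ℕ} (p : Finset (Fin k) → ℝ) (c : ℕ → ℝ) :
    ∑ S, c S.card * p S = ∑ s ∈ Finset.range (k + 1), c s * levelSum p s := by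
  rw [sum_eq_sum_levels]
  refine Finset.sum_congr rfl fun s _ => ?_
  rw [levelSum, Finset.mul_sum]
  refine Finset.sum_congr rfl fun S hS => ?_
  rw [(Finset.mem_powersetCard.1 hS).2]

/-- Sums over the sets covering `V` are sums over the element added. -/
theorem sum_covers {k : ℕ} (V : Finset (Fin k)) (h : Finset (Fin k) → ℝ) :
    ∑ S with V ⊆ S ∧ S.card = V.card + 1, h S = ∑ j ∈ Vᶜ, h (insert j V) := by
  symm
  refine Finset.sum_nbij (fun j => insert j V) ?_ ?_ ?_ (fun _ _ => rfl)
  · intro j hj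
    have hj' : j ∉ V := by simpa using hj
    simp [Finset.card_insert_of_notMem hj']
  · intro i hi j hj hij
    have hi' : i ∉ V := by simpa using hi
    have h1 : i ∈ insert j V := by
      have : insert i V = insert j V := hij
      rw [← this]; simp
    rcases Finset.mem_insert.1 h1 with h2 | h2
    · exact h2
    · exact absurd h2 hi'
  · intro S hS
    simp only [Finset.coe_filter, Finset.mem_univ, true_and, Set.mem_ofPred_eq] at hS
    obtain ⟨j, hj, rfl⟩ := (Finset.covBy_iff_exists_insert).1
      (Finset.covBy_iff_card_sdiff_eq_one.2 ⟨hS.1, by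
        rw [Finset.card_sdiff_of_subset hS.1]; omega⟩)
    exact ⟨j, by simpa using hj, rfl⟩

/-- Covering pairs `T ⋖ V` between levels `s` and `s + 1` counted from above and from below. -/
theorem sum_flags {k : ℕ} (s : ℕ) (h : Finset (Fin k) → Finset (Fin k) → ℝ) :
    ∑ V ∈ Finset.powersetCard (s + 1) Finset.univ, ∑ a ∈ V, h (V.erase a) V
      = ∑ T ∈ Finset.powersetCard s Finset.univ, ∑ b ∈ Tᶜ, h T (insert b T) := by
  rw [Finset.sum_sigma', Finset.sum_sigma']
  refine Finset.sum_bij' (fun q _ => ⟨q.1.erase q.2, q.2⟩) (fun q _ => ⟨insert q.2 q.1, q.2⟩)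
    ?_ ?_ ?_ ?_ ?_
  · rintro ⟨V, a⟩ hq
    simp only [Finset.mem_sigma, Finset.mem_powersetCard_univ] at hq ⊢
    simp [Finset.card_erase_of_mem hq.2, hq.1]
  · rintro ⟨T, b⟩ hq
    simp only [Finset.mem_sigma, Finset.mem_powersetCard_univ, Finset.mem_compl] at hq ⊢
    simp [Finset.card_insert_of_notMem hq.2, hq.1]
  · rintro ⟨V, a⟩ hq
    simp only [Finset.mem_sigma] at hq
    simp [Finset.insert_erase hq.2]
  · rintro ⟨T, b⟩ hq
    simp only [Finset.mem_sigma, Finset.mem_compl] at hq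
    simp [Finset.erase_insert hq.2]
  · rintro ⟨V, a⟩ hq
    simp only [Finset.mem_sigma] at hq
    simp [Finset.insert_erase hq.2]

theorem card_compl_real {k : ℕ} (T : Finset (Fin k)) : ((Tᶜ.card : ℕ) : ℝ) = k - T.card := by
  rw [Finset.card_compl, Fintype.card_fin, Nat.cast_sub]
  simpa using Finset.card_le_univ T

theorem levelSum_nonneg {k : ℕ} {p : Finset (Fin k) → ℝ} (hp : ∀ S, 0 ≤ p S) (s : ℕ) :
    0 ≤ levelSum p s := Finset.sum_nonneg fun S _ => hp S

theorem levelSum_lower {k : ℕ} (p : Finset (Fin k) → ℝ) (s : ℕ) :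
    ∑ T ∈ Finset.powersetCard s Finset.univ, ∑ _b ∈ Tᶜ, p T = (k - s) * levelSum p s := by
  rw [levelSum, Finset.mul_sum]
  refine Finset.sum_congr rfl fun T hT => ?_
  rw [Finset.sum_const, nsmul_eq_mul, card_compl_real, (Finset.mem_powersetCard.1 hT).2]

theorem levelSum_upper {k : ℕ} (p : Finset (Fin k) → ℝ) (s : ℕ) :
    ∑ T ∈ Finset.powersetCard s Finset.univ, ∑ b ∈ Tᶜ, p (insert b T)
      = (s + 1) * levelSum p (s + 1) := by
  rw [← sum_flags s (fun _ V => p V), levelSum, Finset.mul_sum]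
  refine Finset.sum_congr rfl fun T hT => ?_
  rw [Finset.sum_const, nsmul_eq_mul, (Finset.mem_powersetCard.1 hT).2]
  push_cast; rfl

/-- The weighted (LYM-type) comparison of consecutive levels: each set of size `s` has `k - s` upper
covers, each of size `s + 1` has `s + 1` lower covers, and `p` decreases along covers. -/
theorem levelSum_succ_le {k : ℕ} {p : Finset (Fin k) → ℝ} (hp : Antitone p) (s : ℕ) :
    (s + 1) * levelSum p (s + 1) ≤ (k - s) * levelSum p s := by
  rw [← levelSum_lower, ← levelSum_upper]
  exact Finset.sum_le_sum fun T _ => Finset.sum_le_sum fun b _ => hp (Finset.subset_insert b T)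

/-- A set of size `s` lies below `2 ^ (k - s)` sets and above `2 ^ s` sets. -/
theorem sum_nested {k : ℕ} (p : Finset (Fin k) → ℝ) (B : ℝ) :
    ∑ T, ∑ S with T ⊆ S, (p T + B * p S)
      = ∑ s ∈ Finset.range (k + 1), (2 ^ (k - s) + B * 2 ^ s) * levelSum p s := by
  rw [← sum_weight_eq_sum_levels]
  simp only [Finset.sum_add_distrib, add_mul]
  congr 1
  · refine Finset.sum_congr rfl fun T _ => ?_
    have : (Finset.univ.filter fun S => T ⊆ S) = Finset.Icc T Finset.univ := by ext; simp
    rw [this, Finset.sum_const, Finset.card_Icc_finset (Finset.subset_univ T)]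
    simp
  · simp only [Finset.sum_filter]
    rw [Finset.sum_comm]
    refine Finset.sum_congr rfl fun S _ => ?_
    rw [← Finset.sum_filter]
    have : (Finset.univ.filter fun T => T ⊆ S) = S.powerset := by ext; simp
    rw [this, Finset.sum_const, Finset.card_powerset]
    simp; ring

/-- Chains `T ⋖ V ⋖ S`, indexed by `S` and the first added element on the left and by the two added
elements in order on the right. -/
theorem sum_two_step {k : ℕ} (T : Finset (Fin k)) (g : Finset (Fin k) → Finset (Fin k) → ℝ) :
    ∑ S with T ⊆ S ∧ S.card = T.card + 2, ∑ i ∈ S \ T, g (insert i T) S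
      = ∑ i ∈ Tᶜ, ∑ j ∈ (insert i T)ᶜ, g (insert i T) (insert j (insert i T)) := by
  have : ∀ i ∈ Tᶜ, ∑ j ∈ (insert i T)ᶜ, g (insert i T) (insert j (insert i T))
      = ∑ S with insert i T ⊆ S ∧ S.card = (insert i T).card + 1, g (insert i T) S :=
    fun i _ => (sum_covers (insert i T) (g (insert i T))).symm
  rw [Finset.sum_congr rfl this]
  refine Finset.sum_comm' ?_
  intro S i
  simp only [Finset.mem_filter, Finset.mem_univ, true_and, Finset.mem_sdiff, Finset.mem_compl,
    Finset.insert_subset_iff]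
  constructor
  · rintro ⟨⟨h1, h2⟩, h3, h4⟩
    exact ⟨⟨⟨h3, h1⟩, by rw [Finset.card_insert_of_notMem h4]; omega⟩, h4⟩
  · rintro ⟨⟨⟨h3, h1⟩, h2⟩, h4⟩
    rw [Finset.card_insert_of_notMem h4] at h2
    exact ⟨⟨h1, by omega⟩, h3, h4⟩

/-- The right-hand side is linear in the level sums because the level of each of `T`, `insert i T`, `S`
is constant; the coefficients count the flags through a given set. -/
theorem sum_two_step_level {k : ℕ} (p : Finset (Fin k) → ℝ) (t : ℕ) :
    ∑ T ∈ Finset.powersetCard t Finset.univ, ∑ S with T ⊆ S ∧ S.card = T.card + 2,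
        ∑ i ∈ S \ T, (p (insert i T) - p T / 2 - p S / 2)
      = (t + 1) * (k - t - 1) * levelSum p (t + 1) - (k - t) * (k - t - 1) / 2 * levelSum p t
        - (t + 1) * (t + 2) / 2 * levelSum p (t + 2) := by
  have h1 : ∑ T ∈ Finset.powersetCard t Finset.univ, ∑ i ∈ Tᶜ, ∑ _j ∈ (insert i T)ᶜ,
      p (insert i T) = (t + 1) * (k - t - 1) * levelSum p (t + 1) := by
    rw [← sum_flags t (fun _ V => ∑ _j ∈ Vᶜ, p V), levelSum, Finset.mul_sum]
    refine Finset.sum_congr rfl fun V hV => ?_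
    rw [Finset.sum_const, Finset.sum_const, nsmul_eq_mul, nsmul_eq_mul, card_compl_real,
      (Finset.mem_powersetCard.1 hV).2]
    push_cast; ring
  have h2 : ∑ T ∈ Finset.powersetCard t Finset.univ, ∑ i ∈ Tᶜ, ∑ _j ∈ (insert i T)ᶜ,
      p T = (k - t) * (k - t - 1) * levelSum p t := by
    rw [levelSum, Finset.mul_sum]
    refine Finset.sum_congr rfl fun T hT => ?_
    have : ∀ i ∈ Tᶜ, ∑ _j ∈ (insert i T)ᶜ, p T = (k - t - 1) * p T := by
      intro i hi
      rw [Finset.sum_const, nsmul_eq_mul, card_compl_real,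
        Finset.card_insert_of_notMem (by simpa using hi), (Finset.mem_powersetCard.1 hT).2]
      push_cast; ring
    rw [Finset.sum_congr rfl this, Finset.sum_const, nsmul_eq_mul, card_compl_real,
      (Finset.mem_powersetCard.1 hT).2]
    ring
  have h3 : ∑ T ∈ Finset.powersetCard t Finset.univ, ∑ i ∈ Tᶜ, ∑ j ∈ (insert i T)ᶜ,
      p (insert j (insert i T)) = (t + 1) * (t + 2) * levelSum p (t + 2) := by
    rw [← sum_flags t (fun _ V => ∑ j ∈ Vᶜ, p (insert j V))]
    have h4 := levelSum_upper p (t + 1)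
    push_cast at h4
    have : ((t : ℝ) + 1) * (t + 2) * levelSum p (t + 2)
      = (t + 1) * ((t + 1 + 1) * levelSum p (t + 1 + 1)) := by ring_nf
    rw [this, ← h4, Finset.mul_sum]
    refine Finset.sum_congr rfl fun V hV => ?_
    rw [Finset.sum_const, nsmul_eq_mul, (Finset.mem_powersetCard.1 hV).2]
    push_cast; rfl
  have h5 : ∀ T ∈ Finset.powersetCard t (Finset.univ : Finset (Fin k)),
      ∑ S with T ⊆ S ∧ S.card = T.card + 2,
        ∑ i ∈ S \ T, (p (insert i T) - p T / 2 - p S / 2)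
      = ∑ i ∈ Tᶜ, ∑ j ∈ (insert i T)ᶜ,
        (p (insert i T) - p T / 2 - p (insert j (insert i T)) / 2) := fun T _ =>
    sum_two_step T (fun V S => p V - p T / 2 - p S / 2)
  rw [Finset.sum_congr rfl h5]
  simp only [Finset.sum_sub_distrib, ← Finset.sum_div]
  rw [h1, h2, h3]
  ring

/-! ### Linear lower bounds from pairs of sets -/

/-- The linear lower bound for `∑ Y T S`. At each pair with `|S \ T| ≠ 2` the hypothesis is used with the
nested sets `S, T`. If `S \ T = {i, j}`, the bound is the mixture with weights `1 - ε |T|` and `ε |T|` of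
the nested one and the one for the incomparable sets `T ∪ {i}`, `T ∪ {j}`; the latter is made linear by
`min (p (T ∪ {i})) (p (T ∪ {j})) ≥ p (T ∪ {i}) + p (T ∪ {j}) - p T`. -/
theorem sum_pairs_ge {k : ℕ} {p : Finset (Fin k) → ℝ} (hp : Antitone p)
    {B : ℝ} (hB : 1 ≤ B) {Y : Finset (Fin k) → Finset (Fin k) → ℝ}
    (hY : ∀ U V, p U ≤ p V → p V + B * p U ≤ Y (U ∩ V) (U ∪ V))
    (ε : ℕ → ℝ) (hε0 : ∀ t, 0 ≤ ε t) (hε1 : ∀ t, ε t ≤ 1) :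
    ∑ s ∈ Finset.range (k + 1), ((2 ^ (k - s) + B * 2 ^ s) * levelSum p s
        + ε s * B * ((s + 1) * (k - s - 1) * levelSum p (s + 1)
          - (k - s) * (k - s - 1) / 2 * levelSum p s
          - (s + 1) * (s + 2) / 2 * levelSum p (s + 2)))
      ≤ ∑ T, ∑ S with T ⊆ S, Y T S := by
  have hnest : ∀ T S, T ⊆ S → p T + B * p S ≤ Y T S := by
    intro T S h
    have := hY S T (hp h)
    rwa [Finset.inter_eq_right.2 h, Finset.union_eq_left.2 h] at this
  have key : ∀ T S, T ⊆ S → p T + B * p S + (if S.card = T.card + 2 then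
      ε T.card * B * ∑ i ∈ S \ T, (p (insert i T) - p T / 2 - p S / 2) else 0) ≤ Y T S := by
    intro T S h
    split_ifs with hc
    swap
    · simpa using hnest T S h
    obtain ⟨i, j, hij, hS⟩ := Finset.card_eq_two.1
      (show (S \ T).card = 2 by rw [Finset.card_sdiff_of_subset h]; omega)
    rw [hS, Finset.sum_pair hij]
    have hi : i ∉ T := fun hh => by
      have : i ∈ S \ T := by rw [hS]; simp
      exact (Finset.mem_sdiff.1 this).2 hh
    have hj : j ∉ T := fun hh => by
      have : j ∈ S \ T := by rw [hS]; simp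
      exact (Finset.mem_sdiff.1 this).2 hh
    have hS' : S = T ∪ {i, j} := by rw [← hS, Finset.union_sdiff_of_subset h]
    have hI : insert i T ∩ insert j T = T := by
      ext a; simp only [Finset.mem_inter, Finset.mem_insert]
      constructor
      · rintro ⟨rfl | h1, h2⟩
        · rcases h2 with h2 | h2
          · exact absurd h2 hij
          · exact h2
        · exact h1
      · exact fun h => ⟨Or.inr h, Or.inr h⟩
    have hU : insert i T ∪ insert j T = S := by
      rw [hS']; ext a
      simp only [Finset.mem_union, Finset.mem_insert, Finset.mem_singleton]; tauto
    have h1 := hnest T S h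
    have hpi := hp (Finset.subset_insert i T)
    have hpj := hp (Finset.subset_insert j T)
    have e0 := hε0 T.card
    have e1 := hε1 T.card
    -- the smaller of the two values is at least their sum minus `p T`, whichever it is
    have h2 : p (insert i T) + p (insert j T) + (B - 1) * (p (insert i T) + p (insert j T) - p T)
        ≤ Y T S := by
      rcases le_total (p (insert i T)) (p (insert j T)) with hle | hle
      · have := hY _ _ hle
        rw [hI, hU] at this
        nlinarith
      · have := hY _ _ hle
        rw [Finset.inter_comm, Finset.union_comm, hI, hU] at this
        nlinarith
    have h3 := mul_le_mul_of_nonneg_left h2 e0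
    have h4 := mul_le_mul_of_nonneg_left h1 (sub_nonneg.2 e1)
    linarith
  calc _ = ∑ T, ∑ S with T ⊆ S, (p T + B * p S + (if S.card = T.card + 2 then
      ε T.card * B * ∑ i ∈ S \ T, (p (insert i T) - p T / 2 - p S / 2) else 0)) := by
        simp only [Finset.sum_add_distrib (s := Finset.univ),
          Finset.sum_add_distrib (s := Finset.filter _ _)]
        rw [Finset.sum_add_distrib, ← Finset.sum_add_distrib (s := Finset.univ)]
        simp only [← Finset.sum_add_distrib (s := Finset.filter _ _)]
        rw [sum_nested]
        congr 1
        rw [sum_eq_sum_levels (fun T => ∑ S with T ⊆ S, (if S.card = T.card + 2 then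
          ε T.card * B * ∑ i ∈ S \ T, (p (insert i T) - p T / 2 - p S / 2) else 0))]
        refine Finset.sum_congr rfl fun t _ => ?_
        rw [← sum_two_step_level, Finset.mul_sum]
        refine Finset.sum_congr rfl fun T hT => ?_
        rw [← Finset.sum_filter, Finset.filter_filter, Finset.mul_sum,
          (Finset.mem_powersetCard.1 hT).2]
    _ ≤ _ := Finset.sum_le_sum fun T _ => Finset.sum_le_sum fun S hS =>
        key T S (Finset.mem_filter.1 hS).2

/-! ### Level weights and the constant -/

/-- The inequality `C * ∑ p ≤ ∑ c s * levelSum p s` amounts to nonnegativity of the level sums weighted by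
the surpluses `c s - C`. -/
theorem levels_ge_of_weights {k : ℕ} {p : Finset (Fin k) → ℝ}
    {c : ℕ → ℝ} {C : ℝ} (h : 0 ≤ ∑ s ∈ Finset.range (k + 1), (c s - C) * levelSum p s) :
    C * ∑ S, p S ≤ ∑ s ∈ Finset.range (k + 1), c s * levelSum p s := by
  have := sum_weight_eq_sum_levels p (fun _ => C)
  rw [← Finset.mul_sum] at this
  rw [this, ← sub_nonneg, ← Finset.sum_sub_distrib]
  simpa only [sub_mul] using h

/-- If `k ≤ n`, the weight is smallest at `s = 0`. -/
theorem weight_nonneg_small {k n s : ℕ} (hkn : k ≤ n) (hs : s ≤ k) {C : ℝ}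
    (hC : C ≤ 2 ^ k + 2 ^ n - 1) :
    0 ≤ (2 : ℝ) ^ (k - s) + (2 ^ n - 1) * 2 ^ s - C := by
  obtain ⟨j, rfl⟩ := Nat.exists_eq_add_of_le hs
  have hN : (2 : ℝ) ^ (s + j) ≤ 2 ^ n := pow_le_pow_right₀ (by norm_num) hkn
  rw [pow_add] at hN hC
  simp only [Nat.add_sub_cancel_left]
  have ha : (1 : ℝ) ≤ 2 ^ j := one_le_pow₀ (by norm_num)
  rcases s with _ | s
  · simp at *; linarith
  have hb : (2 : ℝ) ≤ 2 ^ (s + 1) := by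
    rw [pow_succ]; linarith [one_le_pow₀ (M₀ := ℝ) (a := 2) (n := s) (by norm_num)]
  generalize (2 : ℝ) ^ (s + 1) = b at *
  generalize (2 : ℝ) ^ j = a at *
  generalize (2 : ℝ) ^ n = N at *
  -- with `a = 2 ^ (k - s)`, `b = 2 ^ s`, the difference to the weight at `s = 0` factors like this
  have h1 : 0 ≤ (b - 1) * (N - 1 - a) := mul_nonneg (by linarith) (by nlinarith)
  nlinarith

theorem weight_mul {k n s : ℕ} (hs : s ≤ k) (C : ℝ) :
    ((2 : ℝ) ^ (k - s) + (2 ^ n - 1) * 2 ^ s - C) * 2 ^ s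
      = 2 ^ k + (2 ^ n - 1) * (2 ^ s * 2 ^ s) - C * 2 ^ s := by
  have : (2 : ℝ) ^ (k - s) * 2 ^ s = 2 ^ k := by rw [← pow_add, Nat.sub_add_cancel hs]
  linear_combination this

theorem two_pow_gap {a b : ℕ} (h : a < b) : 2 * (2 : ℝ) ^ a ≤ 2 ^ b := by
  rw [← pow_succ']; exact pow_le_pow_right₀ (by norm_num) h

/-- If `k = n + 2 * r`, only the level `s = r` can be deficient. With `N = 2 ^ n`, `M = 2 ^ r`, `b = 2 ^ s`,
the surplus times `b` is `N * (M - b) ^ 2 - b ^ 2 + b`. -/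
theorem weight_nonneg_even {k n r s : ℕ} (hn : 2 ≤ n) (hk : k = n + 2 * r) (hs : s ≤ k)
    (hsr : s ≠ r) :
    0 ≤ (2 : ℝ) ^ (k - s) + (2 ^ n - 1) * 2 ^ s - (2 * 2 ^ (n + r) - 1) := by
  have hb : (0 : ℝ) < 2 ^ s := by positivity
  refine nonneg_of_mul_nonneg_left ?_ hb
  rw [weight_mul hs]
  have hN : (4 : ℝ) ≤ 2 ^ n := by
    calc (4 : ℝ) = 2 ^ 2 := by norm_num
      _ ≤ _ := pow_le_pow_right₀ (by norm_num) hn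
  have hM : (0 : ℝ) < 2 ^ r := by positivity
  have hkk : (2 : ℝ) ^ k = 2 ^ n * (2 ^ r * 2 ^ r) := by rw [hk, ← pow_add, ← pow_add]; congr 1; ring
  rw [hkk, pow_add]
  have h : 2 * (2 : ℝ) ^ s ≤ 2 ^ r ∨ 2 * (2 : ℝ) ^ r ≤ 2 ^ s := by
    rcases lt_or_gt_of_ne hsr with h | h
    · exact Or.inl (two_pow_gap h)
    · exact Or.inr (two_pow_gap h)
  generalize (2 : ℝ) ^ s = b at *
  generalize (2 : ℝ) ^ r = M at *
  generalize (2 : ℝ) ^ n = N at *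
  have hsq : b ^ 2 ≤ 4 * (M - b) ^ 2 := by rcases h with h | h <;> nlinarith
  have := mul_le_mul_of_nonneg_right hN (sq_nonneg (M - b))
  nlinarith

/-- If `k = n + 2 * r + 1`, only the levels `r` and `r + 1` can be deficient. With `N = 2 ^ n`, `M = 2 ^ r`,
`b = 2 ^ s`, the surplus times `b` is `N * (2 * M - b) * (M - b) - b ^ 2 + 3 / 2 * b`. -/
theorem weight_nonneg_odd {k n r s : ℕ} (hn : 2 ≤ n) (hk : k = n + 2 * r + 1) (hs : s ≤ k)
    (hsr : s ≠ r) (hsr' : s ≠ r + 1) :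
    0 ≤ (2 : ℝ) ^ (k - s) + (2 ^ n - 1) * 2 ^ s - (3 * 2 ^ (n + r) - 3 / 2) := by
  have hb : (0 : ℝ) < 2 ^ s := by positivity
  refine nonneg_of_mul_nonneg_left ?_ hb
  rw [weight_mul hs]
  have hN : (4 : ℝ) ≤ 2 ^ n := by
    calc (4 : ℝ) = 2 ^ 2 := by norm_num
      _ ≤ _ := pow_le_pow_right₀ (by norm_num) hn
  have hM : (0 : ℝ) < 2 ^ r := by positivity
  have hkk : (2 : ℝ) ^ k = 2 * (2 ^ n * (2 ^ r * 2 ^ r)) := by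
    rw [hk, ← pow_add, ← pow_add, ← pow_succ']; congr 1; ring
  rw [hkk, pow_add]
  have h : 2 * (2 : ℝ) ^ s ≤ 2 ^ r ∨ 4 * (2 : ℝ) ^ r ≤ 2 ^ s := by
    rcases lt_or_gt_of_ne hsr with h | h
    · exact Or.inl (two_pow_gap h)
    · have := two_pow_gap (show r + 1 < s by omega)
      rw [pow_succ] at this
      exact Or.inr (by linarith)
  generalize (2 : ℝ) ^ s = b at *
  generalize (2 : ℝ) ^ r = M at *
  generalize (2 : ℝ) ^ n = N at *
  have hsq : b ^ 2 ≤ 4 * ((2 * M - b) * (M - b)) := by rcases h with h | h <;> nlinarith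
  have := mul_le_mul_of_nonneg_right hN (show 0 ≤ (2 * M - b) * (M - b) by nlinarith)
  nlinarith

/-- If only level `r + 1` has negative weight, it is enough that the weight of level `r` absorbs it after
`P (r + 1)` has been bounded by a multiple of `P r`. -/
theorem weights_nonneg_of_one_bad {k r : ℕ} {P f : ℕ → ℝ} (hP : ∀ s, 0 ≤ P s)
    (hlym : ∀ s : ℕ, (s + 1) * P (s + 1) ≤ (k - s) * P s) (hr : r + 1 ≤ k)
    (hf : ∀ s ≤ k, s ≠ r + 1 → 0 ≤ f s) (hf1 : f (r + 1) ≤ 0)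
    (h : 0 ≤ (r + 1) * f r + (k - r) * f (r + 1)) :
    0 ≤ ∑ s ∈ Finset.range (k + 1), f s * P s := by
  have hsub : ({r, r + 1} : Finset ℕ) ⊆ Finset.range (k + 1) := by
    intro a; simp; omega
  have h1 : ∑ s ∈ ({r, r + 1} : Finset ℕ), f s * P s ≤ ∑ s ∈ Finset.range (k + 1), f s * P s := by
    refine Finset.sum_le_sum_of_subset_of_nonneg hsub fun s hs hs' => ?_
    simp at hs hs'
    exact mul_nonneg (hf s (by omega) hs'.2) (hP s)
  rw [Finset.sum_pair (by omega)] at h1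
  refine le_trans ?_ h1
  have hr0 : (0 : ℝ) < r + 1 := by positivity
  refine nonneg_of_mul_nonneg_right ?_ hr0
  have h2 := mul_le_mul_of_nonpos_left (hlym r) hf1
  have h3 := mul_nonneg h (hP r)
  nlinarith

/-- If only levels `r + 1` and `r + 2` have negative weight, it is enough that the weight of level `r`
absorbs both after `P (r + 1)` and `P (r + 2)` have been bounded by multiples of `P r`. -/
theorem weights_nonneg_of_two_bad {k r : ℕ} {P f : ℕ → ℝ} (hP : ∀ s, 0 ≤ P s)
    (hlym : ∀ s : ℕ, (s + 1) * P (s + 1) ≤ (k - s) * P s) (hr : r + 2 ≤ k)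
    (hf : ∀ s ≤ k, s ≠ r + 1 → s ≠ r + 2 → 0 ≤ f s) (hf1 : f (r + 1) ≤ 0) (hf2 : f (r + 2) ≤ 0)
    (h : 0 ≤ (r + 1) * (r + 2) * f r + (k - r) * (r + 2) * f (r + 1)
      + (k - r) * (k - r - 1) * f (r + 2)) :
    0 ≤ ∑ s ∈ Finset.range (k + 1), f s * P s := by
  have hsub : ({r, r + 1, r + 2} : Finset ℕ) ⊆ Finset.range (k + 1) := by
    intro a; simp; omega
  have h1 : ∑ s ∈ ({r, r + 1, r + 2} : Finset ℕ), f s * P s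
      ≤ ∑ s ∈ Finset.range (k + 1), f s * P s := by
    refine Finset.sum_le_sum_of_subset_of_nonneg hsub fun s hs hs' => ?_
    simp at hs hs'
    exact mul_nonneg (hf s (by omega) hs'.2.1 hs'.2.2) (hP s)
  rw [Finset.sum_insert (by simp), Finset.sum_pair (by omega)] at h1
  refine le_trans ?_ h1
  have hr0 : (0 : ℝ) < (r + 1) * (r + 2) := by positivity
  refine nonneg_of_mul_nonneg_right ?_ hr0
  have hk : (r : ℝ) + 2 ≤ k := by exact_mod_cast hr
  have h2 := hlym r
  have h3 := hlym (r + 1)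
  push_cast at h3
  have h4 : (r + 1) * (r + 2) * P (r + 2) ≤ (k - r) * (k - r - 1) * P r := by
    have a := mul_le_mul_of_nonneg_left h3 (show (0 : ℝ) ≤ r + 1 by positivity)
    have b := mul_le_mul_of_nonneg_left h2 (show (0 : ℝ) ≤ k - r - 1 by linarith)
    have e : P (r + 1 + 1) = P (r + 2) := rfl
    rw [e] at a
    linarith
  have h5 := mul_le_mul_of_nonpos_left h4 hf2
  have h6 := mul_le_mul_of_nonpos_left
    (mul_le_mul_of_nonneg_left h2 (show (0 : ℝ) ≤ r + 2 by positivity)) hf1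
  have h7 := mul_nonneg h (hP r)
  linarith

theorem lin_le_two_pow (n : ℕ) (hn : 3 ≤ n) : (n : ℝ) + 5 ≤ 2 ^ n := by
  induction n, hn using Nat.le_induction with
  | base => norm_num
  | succ m hm ih => 
    rw [pow_succ]; push_cast; linarith [show (0 : ℝ) ≤ m by positivity]

/-- The nested pairs alone give the inequality when `n + k` is even and `n < k`. -/
theorem weights_even {k n r : ℕ} {P : ℕ → ℝ} (hn : 2 ≤ n) (hr : 1 ≤ r) (hk : k = n + 2 * r)
    (hP : ∀ s, 0 ≤ P s) (hlym : ∀ s : ℕ, (s + 1) * P (s + 1) ≤ (k - s) * P s) :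
    0 ≤ ∑ s ∈ Finset.range (k + 1),
      ((2 : ℝ) ^ (k - s) + (2 ^ n - 1) * 2 ^ s - (2 * 2 ^ (n + r) - 1)) * P s := by
  -- for these `r` the general estimate fails and levels below `r - 1` are needed as well
  by_cases hex : n = 2 ∧ 2 ≤ r ∧ r ≤ 5
  · obtain ⟨rfl, h2, h5⟩ := hex
    have l0 := hlym 0
    have l1 := hlym 1
    have l2 := hlym 2
    have l3 := hlym 3
    have l4 := hlym 4
    interval_cases r <;> subst hk <;> norm_num [Finset.sum_range_succ] at * <;>
      linarith [hP 0, hP 1, hP 2, hP 3, hP 4, hP 5, hP 6, hP 7, hP 8, hP 9, hP 10, hP 11, hP 12]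
  obtain ⟨r, rfl⟩ : ∃ q, r = q + 1 := ⟨r - 1, by omega⟩
  refine weights_nonneg_of_one_bad (r := r) hP hlym (by omega)
    (fun s hs hsr => weight_nonneg_even hn hk hs hsr) ?_ ?_
  · have : k - (r + 1) = n + (r + 1) := by omega
    rw [this, pow_add]
    have : (1 : ℝ) ≤ 2 ^ (r + 1) := one_le_pow₀ (by norm_num)
    linarith
  · have e1 : k - (r + 1) = n + (r + 1) := by omega
    have e2 : k - r = n + (r + 1) + 1 := by omega
    have e3 : (k : ℝ) = n + 2 * (r + 1) := by rw [hk]; push_cast; ring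
    rw [e1, e2, e3]
    simp only [pow_add, pow_one]
    have hM : (1 : ℝ) ≤ 2 ^ r := one_le_pow₀ (by norm_num)
    have hr0 : (0 : ℝ) ≤ r := by positivity
    rcases Nat.eq_zero_or_pos r with rfl | hrp
    · have : (n : ℝ) + 2 ≤ 2 ^ n := by
        rcases Nat.lt_or_ge n 3 with h | h
        · have : n = 2 := by omega
          subst this; norm_num
        · linarith [lin_le_two_pow n h]
      norm_num
      linarith
    have hrp' : (1 : ℝ) ≤ r := by exact_mod_cast hrp
    have key : 2 * ((n : ℝ) + r + 2) ≤ (r + 1) * (2 ^ n - 1) := by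
      rcases Nat.lt_or_ge n 3 with h | h
      · have : n = 2 := by omega
        subst this
        have : 5 ≤ r := by omega
        have : (5 : ℝ) ≤ r := by exact_mod_cast this
        norm_num; linarith
      · have := lin_le_two_pow n h
        nlinarith [mul_le_mul_of_nonneg_left this (show (0 : ℝ) ≤ r + 1 by linarith)]
    have := mul_le_mul_of_nonneg_right key (show (0 : ℝ) ≤ 2 ^ r by linarith)
    nlinarith

theorem quad_le_two_pow (n : ℕ) (hn : 5 ≤ n) : ((n : ℝ) + 3) * (5 * n + 12) ≤ 12 * 2 ^ n + 2 := by
  induction n, hn using Nat.le_induction with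
  | base => norm_num
  | succ m hm ih =>
    have : (5 : ℝ) ≤ m := by exact_mod_cast hm
    rw [pow_succ]; push_cast; nlinarith

theorem quad_le_two_pow' (n : ℕ) (hn : 4 ≤ n) :
    ((n : ℝ) + 4) * (2 * n + 9) ≤ 9 * 2 ^ n - 3 := by
  induction n, hn using Nat.le_induction with
  | base => norm_num
  | succ m hm ih =>
    have : (4 : ℝ) ≤ m := by exact_mod_cast hm
    rw [pow_succ]; push_cast; nlinarith

/-- The nested pairs alone give the inequality when `n + k` is odd and `n + 3 ≤ k`, apart from
`(n, k) = (2, 5), (3, 6), (4, 7), (2, 7)`. -/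
theorem weights_odd {k n r : ℕ} {P : ℕ → ℝ} (hn : 2 ≤ n) (hr : 1 ≤ r) (hk : k = n + 2 * r + 1)
    (hbad : ¬ (r = 1 ∧ n ≤ 4)) (hbad' : ¬ (r = 2 ∧ n = 2))
    (hP : ∀ s, 0 ≤ P s) (hlym : ∀ s : ℕ, (s + 1) * P (s + 1) ≤ (k - s) * P s) :
    0 ≤ ∑ s ∈ Finset.range (k + 1),
      ((2 : ℝ) ^ (k - s) + (2 ^ n - 1) * 2 ^ s - (3 * 2 ^ (n + r) - 3 / 2)) * P s := by
  -- the finitely many pairs for which the general estimate below is too weak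
  by_cases hex : n = 2 ∧ 3 ≤ r ∧ r ≤ 6
  · obtain ⟨rfl, h2, h5⟩ := hex
    have l0 := hlym 0
    have l1 := hlym 1
    have l2 := hlym 2
    have l3 := hlym 3
    have l4 := hlym 4
    have l5 := hlym 5
    have l6 := hlym 6
    clear hlym
    interval_cases r <;> subst hk <;> norm_num [Finset.sum_range_succ] at * <;>
      linarith [hP 0, hP 1, hP 2, hP 3, hP 4, hP 5, hP 6, hP 7, hP 8, hP 9, hP 10, hP 11, hP 12,
        hP 13, hP 14, hP 15]
  by_cases hex' : n = 3 ∧ 2 ≤ r ∧ r ≤ 3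
  · obtain ⟨rfl, h2, h5⟩ := hex'
    have l0 := hlym 0
    have l1 := hlym 1
    have l2 := hlym 2
    have l3 := hlym 3
    clear hlym
    interval_cases r <;> subst hk <;> norm_num [Finset.sum_range_succ] at * <;>
      linarith [hP 0, hP 1, hP 2, hP 3, hP 4, hP 5, hP 6, hP 7, hP 8, hP 9, hP 10]
  obtain ⟨r, rfl⟩ : ∃ q, r = q + 1 := ⟨r - 1, by omega⟩
  have e1 : k - (r + 1) = n + (r + 1) + 1 := by omega
  have e2 : k - r = n + (r + 1) + 2 := by omega
  have e3 : (k : ℝ) = n + 2 * (r + 1) + 1 := by rw [hk]; push_cast; ring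
  have e4 : k - (r + 2) = n + r + 1 := by omega
  have hM : (1 : ℝ) ≤ 2 ^ r := one_le_pow₀ (by norm_num)
  have hN : (0 : ℝ) < 2 ^ n := by positivity
  refine weights_nonneg_of_two_bad (r := r) hP hlym (by omega)
    (fun s hs hsr hsr' => weight_nonneg_odd hn hk hs hsr hsr') ?_ ?_ ?_
  · rw [e1]; simp only [pow_add, pow_one]; linarith
  · rw [e4]; simp only [pow_add, pow_one]; linarith
  · rw [e1, e2, e3, e4]
    simp only [pow_add, pow_one]
    have hr0 : (0 : ℝ) ≤ r := by positivity
    have hn0 : (0 : ℝ) ≤ n := by positivity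
    rcases Nat.eq_zero_or_pos r with rfl | hrp
    · have := quad_le_two_pow n (by omega)
      norm_num
      nlinarith
    have hrp' : (1 : ℝ) ≤ r := by exact_mod_cast hrp
    have key : ((n : ℝ) + r + 3) * (2 * n + 3 * r + 6)
        ≤ (r + 1) * (r + 2) * (3 * 2 ^ n - 1) / 2 := by
      rcases Nat.lt_or_ge n 4 with h | h
      · obtain rfl | rfl : n = 2 ∨ n = 3 := by omega
        · have : 6 ≤ r := by omega
          have : (6 : ℝ) ≤ r := by exact_mod_cast this
          norm_num; nlinarith
        · have : 3 ≤ r := by omega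
          have : (3 : ℝ) ≤ r := by exact_mod_cast this
          norm_num; nlinarith
      · have h1 := quad_le_two_pow' n h
        have h2 := mul_le_mul_of_nonneg_left h1 (show (0 : ℝ) ≤ (r + 1) * (r + 2) by positivity)
        obtain ⟨t, rfl⟩ : ∃ t, r = t + 1 := ⟨r - 1, by omega⟩
        push_cast at *
        have : (0 : ℝ) ≤ t := by positivity
        have : 0 ≤ (t : ℝ) * n := by positivity
        have : 0 ≤ (t : ℝ) * n * n := by positivity
        have : 0 ≤ (t : ℝ) * t * n := by positivity
        have : 0 ≤ (t : ℝ) * t * n * n := by positivity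
        nlinarith
    have h2 := mul_le_mul_of_nonneg_right key (show (0 : ℝ) ≤ 2 ^ r by linarith)
    have : 0 ≤ (r : ℝ) * n := by positivity
    nlinarith

/-! ### Cases with incomparable pairs -/

theorem nat_le_two_pow_sub_one (n : ℕ) : (n : ℝ) ≤ 2 ^ n - 1 := by
  have : n + 1 ≤ 2 ^ n := Nat.lt_two_pow_self
  have : (n : ℝ) + 1 ≤ 2 ^ n := by exact_mod_cast this
  linarith

/-- The case `k = n + 1`. The weight of level 1 is deficient by `1 / 2`, level 0 has a surplus of only `1 / 2`, and
the level comparison `P 1 ≤ k * P 0` loses a factor `k`. Let `{m}` be the singleton with the largest `p`.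
At the pairs `(∅, {m, i})` the bound from the incomparable sets `{m}`, `{i}` is mixed in with weight
`θ = 1 / (2 * (2 ^ n - 1))`, which pays for all singletons but `{m}`; the surplus of level 0 pays for `{m}`
and for the loss `n * θ * (p ∅ - p {m})`, since `n ≤ 2 ^ n - 1`. -/
theorem pairs_ge_special {n : ℕ} (hn : 2 ≤ n) {p : Finset (Fin (n + 1)) → ℝ} (hp : Antitone p)
    (hp0 : ∀ S, 0 ≤ p S) {Y : Finset (Fin (n + 1)) → Finset (Fin (n + 1)) → ℝ}
    (hY : ∀ U V, p U ≤ p V → p V + (2 ^ n - 1) * p U ≤ Y (U ∩ V) (U ∪ V)) :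
    (3 * 2 ^ n - 3 / 2) * ∑ S, p S ≤ ∑ T, ∑ S with T ⊆ S, Y T S := by
  obtain ⟨m, -, hm⟩ := Finset.exists_max_image (Finset.univ : Finset (Fin (n + 1)))
    (fun i => p {i}) Finset.univ_nonempty
  have hB4 : (4 : ℝ) ≤ 2 ^ n := by
    calc (4 : ℝ) = 2 ^ 2 := by norm_num
      _ ≤ _ := pow_le_pow_right₀ (by norm_num) hn
  have hnB := nat_le_two_pow_sub_one n
  set B : ℝ := 2 ^ n - 1 with hB
  have hBpos : 0 < B := by linarith
  set θ : ℝ := 1 / (2 * B) with hθ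
  have hθB : θ * B = 1 / 2 := by rw [hθ]; field_simp
  have hθ0 : 0 ≤ θ := by positivity
  have hθ1 : θ ≤ 1 := by rw [hθ, div_le_one (by linarith)]; linarith
  -- gain over the nested bound at the pair `(∅, S)` with `S = {m, i}`, where `S.erase m = {i}`
  let e : Finset (Fin (n + 1)) → ℝ := fun S =>
    p {m} + B * p (S.erase m) - p ∅ - B * p S
  have hnest : ∀ T S, T ⊆ S → p T + B * p S ≤ Y T S := by
    intro T S h
    have := hY S T (hp h)
    rwa [Finset.inter_eq_right.2 h, Finset.union_eq_left.2 h] at this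
  have key : ∀ T S, T ⊆ S → p T + B * p S + (if T = ∅ then
      (if {m} ⊆ S ∧ S.card = ({m} : Finset (Fin (n + 1))).card + 1 then θ * e S else 0) else 0)
        ≤ Y T S := by
    intro T S h
    have h1 := hnest T S h
    split_ifs with hT hS
    · subst hT
      obtain ⟨hmS, hc⟩ := hS
      rw [Finset.singleton_subset_iff] at hmS
      obtain ⟨i, hi⟩ := Finset.card_eq_one.1
        (show (S.erase m).card = 1 by rw [Finset.card_erase_of_mem hmS]; simpa using hc)
      have him : i ≠ m := by
        have : i ∈ S.erase m := by rw [hi]; simp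
        exact (Finset.mem_erase.1 this).1
      have h2 := hY {i} {m} (hm i (Finset.mem_univ i))
      have hI : ({i} ∩ {m} : Finset (Fin (n + 1))) = ∅ := by
        rw [Finset.singleton_inter_of_notMem]; simpa using him
      have hU : ({i} ∪ {m} : Finset (Fin (n + 1))) = S := by
        rw [← Finset.insert_erase hmS, hi, Finset.union_comm]; rfl
      rw [hI, hU] at h2
      simp only [e, hi]
      have h3 := mul_le_mul_of_nonneg_left h2 hθ0
      have h4 := mul_le_mul_of_nonneg_left h1 (sub_nonneg.2 hθ1)
      linarith
    · simpa using h1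
    · simpa using h1
  have hsum : ∑ s ∈ Finset.range (n + 1 + 1), (2 ^ (n + 1 - s) + B * 2 ^ s) * levelSum p s
      + ∑ i ∈ ({m} : Finset (Fin (n + 1)))ᶜ, θ * e (insert i {m})
      ≤ ∑ T, ∑ S with T ⊆ S, Y T S := by
    refine le_trans (le_of_eq ?_) (Finset.sum_le_sum fun T _ => Finset.sum_le_sum fun S hS =>
        key T S (Finset.mem_filter.1 hS).2)
    simp only [Finset.sum_add_distrib (s := Finset.filter _ _) (g := fun _ => ite _ _ _)]
    rw [Finset.sum_add_distrib (s := Finset.univ), sum_nested]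
    congr 1
    rw [Finset.sum_eq_single (∅ : Finset (Fin (n + 1))) (by intro T _ hT; simp [hT]) (by simp)]
    simp only [if_true]
    rw [← Finset.sum_filter, Finset.filter_filter, ← sum_covers _ (fun S => θ * e S)]
    simp
  have hP0 : levelSum p 0 = p ∅ := by simp [levelSum]
  have hP1 : levelSum p 1 = ∑ i, p {i} := by
    have := levelSum_upper p 0
    simp at this
    rw [← this]
  have hP1' : levelSum p 1 = p {m} + ∑ i ∈ ({m} : Finset (Fin (n + 1)))ᶜ, p {i} := by
    rw [hP1, ← Finset.sum_add_sum_compl {m}]; simp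
  have hP2 : ∑ i ∈ ({m} : Finset (Fin (n + 1)))ᶜ, p (insert i {m}) ≤ levelSum p 2 := by
    rw [← sum_covers]
    refine Finset.sum_le_sum_of_subset_of_nonneg ?_ fun S _ _ => hp0 S
    intro S; simp
  have he : ∑ i ∈ ({m} : Finset (Fin (n + 1)))ᶜ, θ * e (insert i {m})
      = n * θ * (p {m} - p ∅) + (∑ i ∈ ({m} : Finset (Fin (n + 1)))ᶜ, p {i}) / 2
        - (∑ i ∈ ({m} : Finset (Fin (n + 1)))ᶜ, p (insert i {m})) / 2 := by
    have : ∀ i ∈ ({m} : Finset (Fin (n + 1)))ᶜ, θ * e (insert i {m})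
        = θ * (p {m} - p ∅) + p {i} / 2 - p (insert i {m}) / 2 := by
      intro i hi
      have him : i ≠ m := by simpa using hi
      have : (insert i {m} : Finset (Fin (n + 1))).erase m = {i} := by
        ext a; simp; grind
      simp only [e, this]
      linear_combination (p {i} - p (insert i {m})) * hθB
    rw [Finset.sum_congr rfl this, Finset.sum_sub_distrib, Finset.sum_add_distrib,
      Finset.sum_const, Finset.sum_div, Finset.sum_div, nsmul_eq_mul, card_compl_real]
    simp; ring
  refine le_trans ?_ hsum
  have hC := sum_weight_eq_sum_levels p (fun _ => 3 * 2 ^ n - 3 / 2)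
  rw [← Finset.mul_sum] at hC
  rw [hC, ← sub_nonneg, add_sub_right_comm, ← Finset.sum_sub_distrib]
  have hsub : Finset.range 3 ⊆ Finset.range (n + 1 + 1) := by
    intro a; simp; omega
  have h1 : ∑ s ∈ Finset.range 3, ((2 ^ (n + 1 - s) + B * 2 ^ s) * levelSum p s
        - (3 * 2 ^ n - 3 / 2) * levelSum p s)
      ≤ ∑ s ∈ Finset.range (n + 1 + 1), ((2 ^ (n + 1 - s) + B * 2 ^ s) * levelSum p s
        - (3 * 2 ^ n - 3 / 2) * levelSum p s) := by
    refine Finset.sum_le_sum_of_subset_of_nonneg hsub fun s hs hs' => ?_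
    simp at hs hs'
    have := weight_nonneg_odd (k := n + 1) (n := n) (r := 0) (s := s) hn (by ring) (by omega)
      (by omega) (by omega)
    have := mul_nonneg this (levelSum_nonneg hp0 s)
    rw [add_zero] at this
    linarith
  refine le_trans ?_ (add_le_add_left h1 _)
  rw [he]
  have e1 : n + 1 - 1 = n := rfl
  have e2 : (2 : ℝ) ^ (n + 1 - 2) = 2 ^ n / 2 := by
    have : n = (n + 1 - 2) + 1 := by omega
    rw [eq_div_iff (by norm_num), ← pow_succ, ← this]
  simp only [Finset.sum_range_succ, Finset.sum_range_zero, e1, e2, Nat.sub_zero, pow_succ,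
    pow_zero]
  rw [hP0, hP1']
  have h2 : 0 ≤ (p ∅ - p {m}) * (1 / 2 - n * θ) := by
    refine mul_nonneg (sub_nonneg.2 (hp (Finset.empty_subset _))) ?_
    nlinarith [mul_le_mul_of_nonneg_right hnB hθ0]
  have h3 : 0 ≤ (2 ^ n - 4) * levelSum p 2 := mul_nonneg (by linarith) (levelSum_nonneg hp0 2)
  have h4 := levelSum_nonneg hp0 2
  have hN : (2 : ℝ) ^ n = B + 1 := by rw [hB]; ring
  rw [hN] at *
  nlinarith

/-- Four pairs `(n, k)` in which the nested pairs alone do not suffice, and the mixing weights `ε` of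
`sum_pairs_ge` are used. They are chosen so that the resulting inequality is a nonnegative combination of
the level comparisons and `0 ≤ levelSum p s`. -/
theorem pairs_ge_exceptional {n k : ℕ} {p : Finset (Fin k) → ℝ} (hp : Antitone p)
    (hp0 : ∀ S, 0 ≤ p S) {Y : Finset (Fin k) → Finset (Fin k) → ℝ}
    (hY : ∀ U V, p U ≤ p V → p V + (2 ^ n - 1) * p U ≤ Y (U ∩ V) (U ∪ V)) {r : ℕ}
    (h : (n = 2 ∧ k = 5 ∧ r = 1) ∨ (n = 2 ∧ k = 7 ∧ r = 2) ∨ (n = 3 ∧ k = 6 ∧ r = 1) ∨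
      (n = 4 ∧ k = 7 ∧ r = 1)) :
    (3 * 2 ^ (n + r) - 3 / 2) * ∑ S, p S ≤ ∑ T, ∑ S with T ⊆ S, Y T S := by
  have hB : (1 : ℝ) ≤ 2 ^ n - 1 := by
    have hn : 2 ≤ n := by omega
    have : (2 : ℝ) ^ 2 ≤ 2 ^ n := pow_le_pow_right₀ (by norm_num) hn
    linarith
  have h1 := sum_weight_eq_sum_levels p (fun _ => 3 * 2 ^ (n + r) - 3 / 2)
  rw [← Finset.mul_sum] at h1
  rw [h1]
  have hpos := levelSum_nonneg hp0
  have hlym := levelSum_succ_le hp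
  have l0 := hlym 0
  have l1 := hlym 1
  have l2 := hlym 2
  have l3 := hlym 3
  clear hlym h1
  have main := fun ε : ℕ → ℝ => sum_pairs_ge hp hB hY ε
  rcases h with ⟨rfl, rfl, rfl⟩ | ⟨rfl, rfl, rfl⟩ | ⟨rfl, rfl, rfl⟩ | ⟨rfl, rfl, rfl⟩
  · refine le_trans ?_ (main (fun t => if t = 0 ∨ t = 1 then 1 / 6 else 0)
      (fun t => by split_ifs <;> norm_num) (fun t => by split_ifs <;> norm_num))
    norm_num [Finset.sum_range_succ] at *
    linarith [hpos 0, hpos 1, hpos 2, hpos 3, hpos 4, hpos 5]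
  · refine le_trans ?_ (main (fun t => if t = 2 then 31 / 630 else 0)
      (fun t => by split_ifs <;> norm_num) (fun t => by split_ifs <;> norm_num))
    norm_num [Finset.sum_range_succ] at *
    linarith [hpos 0, hpos 1, hpos 2, hpos 3, hpos 4, hpos 5, hpos 6, hpos 7]
  · refine le_trans ?_ (main (fun t => if t = 1 then 4 / 105 else 0)
      (fun t => by split_ifs <;> norm_num) (fun t => by split_ifs <;> norm_num))
    norm_num [Finset.sum_range_succ] at *
    linarith [hpos 0, hpos 1, hpos 2, hpos 3, hpos 4, hpos 5, hpos 6]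
  · refine le_trans ?_ (main (fun t => if t = 1 then 1 / 210 else 0)
      (fun t => by split_ifs <;> norm_num) (fun t => by split_ifs <;> norm_num))
    norm_num [Finset.sum_range_succ] at *
    linarith [hpos 0, hpos 1, hpos 2, hpos 3, hpos 4, hpos 5, hpos 6, hpos 7]

/-! ### Exponents at least two -/

/-- `sum_pairs_ge` with nested pairs only. -/
theorem pairs_ge_of_weights {k : ℕ} {p : Finset (Fin k) → ℝ} (hp : Antitone p)
    {B C : ℝ} (hB : 1 ≤ B) {Y : Finset (Fin k) → Finset (Fin k) → ℝ}
    (hY : ∀ U V, p U ≤ p V → p V + B * p U ≤ Y (U ∩ V) (U ∪ V))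
    (h : 0 ≤ ∑ s ∈ Finset.range (k + 1), (2 ^ (k - s) + B * 2 ^ s - C) * levelSum p s) :
    C * ∑ S, p S ≤ ∑ T, ∑ S with T ⊆ S, Y T S := by
  refine (levels_ge_of_weights h).trans ?_
  have := sum_pairs_ge hp hB hY (fun _ => 0) (fun _ => le_rfl) (fun _ => zero_le_one)
  simpa using this

/-- Equality holds for `m ≥ 3`; for `m ≤ 2` the constant comes from its other branch. -/
theorem Cconst_even (m : ℕ) (hm : 1 ≤ m) : Cconst (2 * m) ≤ 2 * 2 ^ m - 1 := by
  rw [Cconst]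
  split_ifs with h1 h2
  · obtain rfl | rfl : m = 1 ∨ m = 2 := by omega
    all_goals norm_num
  · have : 2 * m / 2 = m := by omega
    rw [this, pow_succ]; linarith
  · omega

/-- Equality holds for `m ≥ 2`. -/
theorem Cconst_odd (m : ℕ) (hm : 1 ≤ m) : Cconst (2 * m + 1) ≤ 3 * 2 ^ m - 3 / 2 := by
  rw [Cconst]
  split_ifs with h1 h2
  · obtain rfl | rfl : m = 1 ∨ m = 2 := by omega
    all_goals norm_num
  · omega
  · have : (2 * m + 1 - 1) / 2 = m := by omega
    rw [this]

theorem Cconst_le (k : ℕ) : Cconst (k + 1) ≤ 2 * (3 / 2) ^ k := by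
  rw [Cconst]
  have aux : ∀ m : ℕ, 3 ≤ m → (3 : ℝ) * 2 ^ m - 3 / 2 ≤ 2 * (3 / 2) ^ (2 * m) ∧
      (2 : ℝ) * 2 ^ m - 1 ≤ 4 / 3 * (3 / 2) ^ (2 * m) := by
    intro m hm
    induction m, hm using Nat.le_induction with
    | base => norm_num
    | succ m hm ih =>
      have : (2 : ℝ) ^ 3 ≤ 2 ^ m := pow_le_pow_right₀ (by norm_num) hm
      rw [show 2 * (m + 1) = 2 * m + 1 + 1 by ring, pow_succ, pow_succ, pow_succ]
      constructor <;> nlinarith [ih.1, ih.2]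
  split_ifs with h1 h2
  · simp
  · obtain ⟨m, rfl⟩ : ∃ m, k = 2 * m + 1 := ⟨k / 2, by omega⟩
    have h := (aux (m + 1) (by omega)).2
    rw [show (2 * m + 1 + 1) / 2 + 1 = m + 1 + 1 by omega, pow_succ (2 : ℝ) (m + 1)]
    rw [show 2 * (m + 1) = 2 * m + 1 + 1 by ring, pow_succ _ (2 * m + 1)] at h
    linarith
  · obtain ⟨m, rfl⟩ : ∃ m, k = 2 * m := ⟨k / 2, by omega⟩
    have h := (aux m (by omega)).1
    rw [show (2 * m + 1 - 1) / 2 = m by omega]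
    linarith

/-- The inequality for exponents `n ≥ 2`, on the Boolean lattice: `p S` is the `n`-th power of `x` at the
indicator of `S`, and `Y T S` that of `y` at the sum of the indicators of `T` and `S`. -/
theorem pairs_ge {n k : ℕ} (hn : 2 ≤ n) {p : Finset (Fin k) → ℝ} (hp : Antitone p)
    (hp0 : ∀ S, 0 ≤ p S) {Y : Finset (Fin k) → Finset (Fin k) → ℝ}
    (hY : ∀ U V, p U ≤ p V → p V + (2 ^ n - 1) * p U ≤ Y (U ∩ V) (U ∪ V)) :
    Cconst (n + k) * ∑ S, p S ≤ ∑ T, ∑ S with T ⊆ S, Y T S := by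
  have hB : (1 : ℝ) ≤ 2 ^ n - 1 := by
    have : (2 : ℝ) ^ 2 ≤ 2 ^ n := pow_le_pow_right₀ (by norm_num) hn
    linarith
  have hs0 : 0 ≤ ∑ S, p S := Finset.sum_nonneg fun S _ => hp0 S
  rcases Nat.lt_or_ge n k with hnk | hkn
  · obtain ⟨r, hr | hr⟩ := Nat.even_or_odd' (k - n)
    · have hC := Cconst_even (n + r) (by omega)
      rw [show 2 * (n + r) = n + k by omega] at hC
      refine (mul_le_mul_of_nonneg_right hC hs0).trans ?_
      exact pairs_ge_of_weights hp hB hY (weights_even hn (by omega) (by omega)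
        (levelSum_nonneg hp0) (levelSum_succ_le hp))
    · have hC := Cconst_odd (n + r) (by omega)
      rw [show 2 * (n + r) + 1 = n + k by omega] at hC
      refine (mul_le_mul_of_nonneg_right hC hs0).trans ?_
      by_cases hr0 : r = 0
      · subst hr0
        obtain rfl : k = n + 1 := by omega
        exact pairs_ge_special hn hp hp0 hY
      by_cases hbad : (r = 1 ∧ n ≤ 4) ∨ (r = 2 ∧ n = 2)
      · exact pairs_ge_exceptional hp hp0 hY (by omega)
      · rw [not_or] at hbad
        exact pairs_ge_of_weights hp hB hY (weights_odd hn (by omega) (by omega) hbad.1 hbad.2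
          (levelSum_nonneg hp0) (levelSum_succ_le hp))
  -- if `k ≤ n`, the sum `2 ^ k + 2 ^ n` is at least twice the geometric mean
  · have hC : Cconst (n + k) ≤ 2 ^ k + 2 ^ n - 1 := by
      obtain ⟨r, hr | hr⟩ := Nat.even_or_odd' (n - k)
      · have hC := Cconst_even (k + r) (by omega)
        obtain rfl : n = k + 2 * r := by omega
        rw [show 2 * (k + r) = k + 2 * r + k by omega] at hC
        refine hC.trans ?_
        have : (2 : ℝ) ^ (k + 2 * r) = 2 ^ k * (2 ^ r) ^ 2 := by rw [pow_add, mul_comm 2, pow_mul]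
        rw [this, pow_add]
        have : (0 : ℝ) < 2 ^ k := by positivity
        nlinarith [mul_nonneg this.le (sq_nonneg ((2 : ℝ) ^ r - 1))]
      · have hC := Cconst_odd (k + r) (by omega)
        obtain rfl : n = k + 2 * r + 1 := by omega
        rw [show 2 * (k + r) + 1 = k + 2 * r + 1 + k by omega] at hC
        refine hC.trans ?_
        have : (2 : ℝ) ^ (k + 2 * r + 1) = 2 * (2 ^ k * (2 ^ r) ^ 2) := by
          rw [pow_succ, pow_add, mul_comm 2 r, pow_mul]; ring
        rw [this, pow_add]
        have h0 : (0 : ℝ) < 2 ^ k := by positivity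
        have h1 : (1 : ℝ) ≤ 2 ^ r := one_le_pow₀ (by norm_num)
        nlinarith [mul_nonneg h0.le (mul_nonneg (sub_nonneg.2 h1)
          (show (0 : ℝ) ≤ 2 * 2 ^ r - 1 by linarith))]
    refine pairs_ge_of_weights hp hB hY (Finset.sum_nonneg fun s hs => mul_nonneg ?_
      (levelSum_nonneg hp0 s))
    exact weight_nonneg_small hkn (by simp at hs; omega) hC

/-! ### Exponent one -/

theorem sum_supersets_half {k : ℕ} (V : Finset (Fin k)) :
    ∑ S with V ⊆ S, (1 / 2 : ℝ) ^ (S \ V).card = (3 / 2) ^ (k - V.card) := by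
  have h := Finset.sum_pow_mul_eq_add_pow (1 / 2 : ℝ) 1 Vᶜ
  simp only [one_pow, mul_one] at h
  rw [Finset.card_compl, Fintype.card_fin] at h
  norm_num at h ⊢
  rw [← h]
  refine Finset.sum_nbij' (fun S => S \ V) (fun R => R ∪ V) ?_ ?_ ?_ ?_ ?_
  · intro S _; simp [Finset.subset_compl_comm, Finset.sdiff_eq_inter_compl]
  · intro R _; simp
  · intro S hS; simp at hS; simp [hS]
  · intro R hR
    simp [Finset.subset_compl_iff_disjoint_right] at hR
    simp [Finset.union_sdiff_right, hR]
  · intros; rfl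

theorem sum_subsets_half {k : ℕ} (V : Finset (Fin k)) :
    ∑ T with T ⊆ V, (1 / 2 : ℝ) ^ (V \ T).card = (3 / 2) ^ V.card := by
  have h := Finset.sum_pow_mul_eq_add_pow 1 (1 / 2 : ℝ) V
  have e : (Finset.univ.filter fun T => T ⊆ V) = V.powerset := by ext; simp
  rw [e]
  norm_num at h ⊢
  rw [← h]
  refine Finset.sum_congr rfl fun T hT => ?_
  rw [Finset.card_sdiff_of_subset (Finset.mem_powerset.1 hT)]

/-- The exponent `n = 1`. For fixed `T ⊆ S` the hypothesis is averaged over all `V` in the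
interval `[T, S]`, paired with the complement `T ∪ (S \ V)` of `V` in it. A given `V` then receives total weight
`2 * (3 / 2) ^ (k - |V|) * (3 / 2) ^ |V|`. -/
theorem pairs_ge_one {k : ℕ} {p : Finset (Fin k) → ℝ}
    {Y : Finset (Fin k) → Finset (Fin k) → ℝ}
    (hY : ∀ U V, p U + p V ≤ Y (U ∩ V) (U ∪ V)) :
    2 * (3 / 2) ^ k * ∑ S, p S ≤ ∑ T, ∑ S with T ⊆ S, Y T S := by
  have key : ∀ T S, T ⊆ S →
      2 * ∑ V with T ⊆ V ∧ V ⊆ S, (1 / 2 : ℝ) ^ (S \ T).card * p V ≤ Y T S := by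
    intro T S h
    rw [← Finset.mul_sum]
    have hcard : (Finset.univ.filter fun V => T ⊆ V ∧ V ⊆ S).card = 2 ^ (S \ T).card := by
      have : (Finset.univ.filter fun V => T ⊆ V ∧ V ⊆ S) = Finset.Icc T S := by ext; simp
      rw [this, Finset.card_Icc_finset h, Finset.card_sdiff_of_subset h]
    have hrefl : ∑ V with T ⊆ V ∧ V ⊆ S, p (T ∪ (S \ V)) = ∑ V with T ⊆ V ∧ V ⊆ S, p V := by
      refine Finset.sum_nbij' (fun V => T ∪ (S \ V)) (fun V => T ∪ (S \ V)) ?_ ?_ ?_ ?_ ?_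
      · intro V _; simp [Finset.union_subset_iff, h]
      · intro V _; simp [Finset.union_subset_iff, h]
      · intro V hV; simp at hV; ext a; have := @h a; have := @hV.1 a; have := @hV.2 a
        simp; tauto
      · intro V hV; simp at hV; ext a; have := @h a; have := @hV.1 a; have := @hV.2 a
        simp; tauto
      · intros; rfl
    have h2 : ∑ V with T ⊆ V ∧ V ⊆ S, (p V + p (T ∪ (S \ V)))
        ≤ ∑ V with T ⊆ V ∧ V ⊆ S, Y T S := by
      refine Finset.sum_le_sum fun V hV => ?_
      simp at hV
      have h3 := hY V (T ∪ (S \ V))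
      have e1 : V ∩ (T ∪ (S \ V)) = T := by
        ext a; have := @h a; have := @hV.1 a; have := @hV.2 a
        simp; tauto
      have e2 : V ∪ (T ∪ (S \ V)) = S := by
        ext a; have := @h a; have := @hV.1 a; have := @hV.2 a
        simp; tauto
      rwa [e1, e2] at h3
    rw [Finset.sum_add_distrib, hrefl, Finset.sum_const, hcard, nsmul_eq_mul] at h2
    push_cast at h2
    have h3 := mul_le_mul_of_nonneg_left h2 (show (0 : ℝ) ≤ (1 / 2) ^ (S \ T).card by positivity)
    rw [← mul_assoc, ← mul_pow] at h3
    norm_num at h3 ⊢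
    linarith
  refine le_trans (le_of_eq ?_) (Finset.sum_le_sum fun T _ => Finset.sum_le_sum fun S hS =>
        key T S (Finset.mem_filter.1 hS).2)
  simp only [← Finset.mul_sum]
  rw [mul_assoc]
  congr 1
  have : ∀ T : Finset (Fin k), ∑ S with T ⊆ S, ∑ V with T ⊆ V ∧ V ⊆ S,
      (1 / 2 : ℝ) ^ (S \ T).card * p V
      = ∑ V with T ⊆ V, ∑ S with V ⊆ S, (1 / 2 : ℝ) ^ (S \ T).card * p V := by
    intro T
    refine Finset.sum_comm' ?_
    intro S V
    simp only [Finset.mem_filter, Finset.mem_univ, true_and]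
    exact ⟨fun h => ⟨h.2.2, h.2.1⟩, fun h => ⟨h.2.trans h.1, h.2, h.1⟩⟩
  simp only [Finset.mul_sum] at this ⊢
  simp only [this]
  have h2 : ∑ T : Finset (Fin k), ∑ V with T ⊆ V, ∑ S with V ⊆ S,
      (1 / 2 : ℝ) ^ (S \ T).card * p V
      = ∑ V : Finset (Fin k), ∑ T with T ⊆ V, ∑ S with V ⊆ S,
      (1 / 2 : ℝ) ^ (S \ T).card * p V := by
    refine Finset.sum_comm' ?_
    intro S V; simp
  rw [h2]
  refine Finset.sum_congr rfl fun V _ => ?_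
  have h3 : ∀ T ∈ Finset.univ.filter (fun T => T ⊆ V), ∑ S with V ⊆ S,
      (1 / 2 : ℝ) ^ (S \ T).card * p V
      = (1 / 2 : ℝ) ^ (V \ T).card * ((3 / 2) ^ (k - V.card) * p V) := by
    intro T hT
    rw [← sum_supersets_half, Finset.sum_mul, Finset.mul_sum]
    refine Finset.sum_congr rfl fun S hS => ?_
    simp only [Finset.mem_filter, Finset.mem_univ, true_and] at hS hT
    rw [← mul_assoc, ← pow_add]
    congr 2
    rw [Finset.card_sdiff_of_subset hS, Finset.card_sdiff_of_subset hT,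
      Finset.card_sdiff_of_subset (hT.trans hS)]
    have := Finset.card_le_card hS
    have := Finset.card_le_card hT
    omega
  rw [Finset.sum_congr rfl h3, ← Finset.sum_mul, sum_subsets_half, ← mul_assoc, ← pow_add]
  congr 2
  have : V.card ≤ k := by simpa using Finset.card_le_univ V
  omega

/-! ### Translation to vectors -/

/-- Among the terms of the binomial expansion, those involving `b` are at least the same
multiples of `b ^ n`. -/
theorem add_pow_ge {a b : ℝ} (hb : 0 ≤ b) (hab : b ≤ a) {n : ℕ} (hn : 1 ≤ n) :
    a ^ n + (2 ^ n - 1) * b ^ n ≤ (a + b) ^ n := by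
  have ha : 0 ≤ a := hb.trans hab
  induction n, hn using Nat.le_induction with
  | base => norm_num
  | succ n hn ih =>
    have h1 := mul_le_mul_of_nonneg_right ih (add_nonneg ha hb)
    have h2 : b ^ n ≤ a ^ n := pow_le_pow_left₀ hb hab n
    have h3 : 0 ≤ b * (a ^ n - b ^ n) := mul_nonneg hb (sub_nonneg.2 h2)
    have h4 : (1 : ℝ) ≤ 2 ^ n := one_le_pow₀ (by norm_num)
    have h5 : 0 ≤ (2 ^ n - 1) * ((a - b) * b ^ n) :=
      mul_nonneg (by linarith) (mul_nonneg (by linarith) (by positivity))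
    simp only [pow_succ] at *
    nlinarith

/-- The 0/1 vector of a set of coordinates. -/
def indic {k : ℕ} (S : Finset (Fin k)) : Fin k → ℕ := fun i => if i ∈ S then 1 else 0

theorem indic_le_one {k : ℕ} (S : Finset (Fin k)) (i : Fin k) : indic S i ≤ 1 := by
  unfold indic; split_ifs <;> simp

/-- Every `U, V` with intersection `T` and union `S` gives a lower bound at the vector attached to
`T ⊆ S`. -/
theorem indic_inter_add_union {k : ℕ} (U V : Finset (Fin k)) :
    indic (U ∩ V) + indic (U ∪ V) = indic U + indic V := by
  funext i
  simp only [indic, Pi.add_apply, Finset.mem_inter, Finset.mem_union]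
  by_cases h1 : i ∈ U <;> by_cases h2 : i ∈ V <;> simp [h1, h2]

/-- Vectors in `{0,1}^k` are indicators of sets. -/
theorem sum_cube_two {k : ℕ} (f : (Fin k → ℕ) → ℝ) :
    ∑ u ∈ cube k 2, f u = ∑ S : Finset (Fin k), f (indic S) := by
  symm
  refine Finset.sum_nbij' indic (fun u => Finset.univ.filter fun i => u i = 1) ?_ ?_ ?_ ?_ ?_
  · intro S _
    simp only [cube, Fintype.mem_piFinset, Finset.mem_range]
    exact fun i => Nat.lt_succ_of_le (indic_le_one S i)
  · intros; simp
  · intro S _; ext i; simp [indic]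
  · intro u hu
    simp only [cube, Fintype.mem_piFinset, Finset.mem_range] at hu
    funext i
    have := hu i
    simp only [indic, Finset.mem_filter, Finset.mem_univ, true_and]
    split_ifs <;> omega
  · intros; rfl

/-- Vectors in `{0,1,2}^k` are nested pairs `T ⊆ S`: `T` is where the vector is `2`, and `S` where it is
nonzero. -/
theorem sum_cube_three {k : ℕ} (f : (Fin k → ℕ) → ℝ) :
    ∑ w ∈ cube k 3, f w = ∑ T : Finset (Fin k), ∑ S with T ⊆ S, f (indic T + indic S) := by
  symm
  rw [Finset.sum_sigma']
  refine Finset.sum_nbij' (fun q => indic q.1 + indic q.2)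
    (fun w => ⟨Finset.univ.filter fun i => w i = 2, Finset.univ.filter fun i => 1 ≤ w i⟩)
    ?_ ?_ ?_ ?_ ?_
  · rintro ⟨T, S⟩ _
    simp only [cube, Fintype.mem_piFinset, Finset.mem_range]
    intro i
    have := indic_le_one S i
    have := indic_le_one T i
    simp only [Pi.add_apply]; omega
  · intro w _
    simp only [Finset.mem_sigma, Finset.mem_univ, Finset.mem_filter, true_and]
    intro i; simp; omega
  · rintro ⟨T, S⟩ h
    simp only [Finset.mem_sigma, Finset.mem_univ, Finset.mem_filter, true_and] at h
    simp only [Sigma.mk.injEq, heq_eq_eq]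
    constructor <;> ext i <;> have := @h i <;>
      simp only [Finset.mem_filter, Finset.mem_univ, true_and] <;>
      simp only [Pi.add_apply, indic] <;> by_cases h1 : i ∈ T <;> by_cases h2 : i ∈ S <;> simp_all
  · intro w hw
    simp only [cube, Fintype.mem_piFinset, Finset.mem_range] at hw
    funext i
    have := hw i
    simp only [indic, Finset.mem_filter, Finset.mem_univ, true_and, Pi.add_apply]
    split_ifs <;> omega
  · intros; rfl

/-- Theorem 2 (main analytic inequality): for `0 ≤ k < d` and non-negative reals
`x_u` (`u ∈ {0,1}^k`), `y_w` (`w ∈ {0,1,2}^k`) with `y_{u+v} ≥ x_u + x_v` and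
`x_u ≥ x_v` whenever `v ⪰ u`, one has
`∑_{w ∈ {0,1,2}^k} y_w^{d-k} ≥ C_d ∑_{u ∈ {0,1}^k} x_u^{d-k}`. -/
theorem stmt1 (d k : ℕ) (hkd : k < d)
    (x y : (Fin k → ℕ) → ℝ)
    (hx : ∀ u, (∀ i, u i ≤ 1) → 0 ≤ x u)
    (hy : ∀ w, (∀ i, w i ≤ 2) → 0 ≤ y w)
    (hadd : ∀ u v : Fin k → ℕ, (∀ i, u i ≤ 1) → (∀ i, v i ≤ 1) →
      x u + x v ≤ y (u + v))
    (hmono : ∀ u v : Fin k → ℕ, (∀ i, u i ≤ 1) → (∀ i, v i ≤ 1) →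
      (∀ i, u i ≤ v i) → x v ≤ x u) :
    ∑ w ∈ cube k 3, y w ^ (d - k) ≥ Cconst d * ∑ u ∈ cube k 2, x u ^ (d - k) := by
  obtain ⟨n, rfl⟩ : ∃ n, d = n + k := ⟨d - k, by omega⟩
  have hn : 1 ≤ n := by omega
  rw [Nat.add_sub_cancel, sum_cube_two, sum_cube_three, ge_iff_le]
  have hx' : ∀ S, 0 ≤ x (indic S) := fun S => hx _ (indic_le_one S)
  have hadd' : ∀ U V : Finset (Fin k),
      x (indic U) + x (indic V) ≤ y (indic (U ∩ V) + indic (U ∪ V)) := by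
    intro U V
    rw [indic_inter_add_union]
    exact hadd _ _ (indic_le_one U) (indic_le_one V)
  rcases Nat.lt_or_ge n 2 with h | h
  · obtain rfl : n = 1 := by omega
    simp only [pow_one]
    have hs : 0 ≤ ∑ S : Finset (Fin k), x (indic S) := Finset.sum_nonneg fun S _ => hx' S
    rw [add_comm 1 k]
    exact (mul_le_mul_of_nonneg_right (Cconst_le k) hs).trans (pairs_ge_one
      (p := fun S => x (indic S)) (Y := fun T S => y (indic T + indic S)) hadd')
  · refine pairs_ge h (p := fun S => x (indic S) ^ n)
      (Y := fun T S => y (indic T + indic S) ^ n) ?_ (fun S => pow_nonneg (hx' S) n) ?_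
    · intro U V hUV
      refine pow_le_pow_left₀ (hx' V) (hmono _ _ (indic_le_one U) (indic_le_one V) fun i => ?_) n
      simp only [indic]
      split_ifs with h1 h2 <;> first | exact absurd (hUV h1) h2 | simp
    · intro U V hUV
      have hle : x (indic U) ≤ x (indic V) :=
        le_of_pow_le_pow_left₀ (by omega) (hx' V) hUV
      refine (add_pow_ge (hx' U) hle hn).trans (pow_le_pow_left₀ ?_ ?_ n)
      · exact add_nonneg (hx' V) (hx' U)
      · rw [add_comm]; exact hadd' U V
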